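/- arXiv:2112.06526 — 2 statements merged into one kernel-verified Lean document; each statement's English description precedes it below -/
import Mathlib

section
/- Every q-basic subgraph of the complete graph K_n has at most 3q edges. -/
open scoped BigOperators Classical
open Finset Filter

noncomputable section

/-- Number of edges of a finite simple graph. -/
def edgeCount {V : Type*} [Fintype V] (G : SimpleGraph V) : ℕ :=
  (Finset.univ.filter (fun e : Sym2 V => e ∈ G.edgeSet)).card

/-- Number of triangles (3-cliques) of a finite simple graph. -/
def triangleCount {V : Type*} [Fintype V] (G : SimpleGraph V) : ℕ :=
  (Finset.univ.filter (fun s : Finset V => G.IsNClique 3 s)).card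

/-- Number of vertices lying in at least one triangle. -/
def vT {V : Type*} [Fintype V] (G : SimpleGraph V) : ℕ :=
  (Finset.univ.filter (fun v : V => ∃ u w : V, G.Adj v u ∧ G.Adj v w ∧ G.Adj u w)).card

/-- Degree of a vertex. -/
def deg {V : Type*} [Fintype V] (G : SimpleGraph V) (v : V) : ℕ :=
  (Finset.univ.filter (fun u => G.Adj v u)).card

/-- Probability that the Erdős–Rényi random graph `G_{n,p}` equals the graph `G`. -/
def graphProb (n : ℕ) (p : ℝ) (G : SimpleGraph (Fin n)) : ℝ :=
  p ^ edgeCount G * (1 - p) ^ (n.choose 2 - edgeCount G)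

/-- Probability of an event under the Erdős–Rényi measure. -/
def prob (n : ℕ) (p : ℝ) (A : Set (SimpleGraph (Fin n))) : ℝ :=
  ∑ G : SimpleGraph (Fin n), if G ∈ A then graphProb n p G else 0

/-- Conditional probability `P(A | B)` (with the convention `0` when `P(B) = 0`). -/
def condProb (n : ℕ) (p : ℝ) (A B : Set (SimpleGraph (Fin n))) : ℝ :=
  prob n p (A ∩ B) / prob n p B

/-- Conditional expectation `E_G[f]` given that every edge of `G` is present. -/
def condExpect (n : ℕ) (p : ℝ) (G : SimpleGraph (Fin n)) (f : SimpleGraph (Fin n) → ℝ) : ℝ :=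
  (∑ H : SimpleGraph (Fin n), if G ≤ H then graphProb n p H * f H else 0) /
    prob n p {H | G ≤ H}

/-- `E_G(T)`: conditional expectation of the number of triangles. -/
def condTri (n : ℕ) (p : ℝ) (G : SimpleGraph (Fin n)) : ℝ :=
  condExpect n p G (fun H => (triangleCount H : ℝ))

/-- The variational quantity `Φ_{n,p,k}(a)`. -/
def Phi (n : ℕ) (p k a : ℝ) : ℝ :=
  sInf {x : ℝ | ∃ G : SimpleGraph (Fin n),
    a * k ≤ condTri n p G ∧ x = (edgeCount G : ℝ) * Real.log (1 / p)}

/-- A seed, with parameters `a, w, C, k` and edge probability `p`. -/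
def IsSeed (n : ℕ) (p a w C k : ℝ) (G : SimpleGraph (Fin n)) : Prop :=
  (a - w) * k ≤ condTri n p G ∧
  (edgeCount G : ℝ) ≤ C * a * w⁻¹ * k ^ ((2 : ℝ) / 3) * Real.log (1 / p)

/-- A core, with parameters `a, w, C, k` and edge probability `p`. -/
def IsCore (n : ℕ) (p a w C k : ℝ) (G : SimpleGraph (Fin n)) : Prop :=
  (a - 2 * w) * k ≤ condTri n p G ∧
  (edgeCount G : ℝ) ≤ C * a * w⁻¹ * k ^ ((2 : ℝ) / 3) * Real.log (1 / p) ∧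
  ∀ e ∈ G.edgeSet,
    w ^ 2 * k ^ ((1 : ℝ) / 3) / (C * a * Real.log (1 / p)) ≤
      condTri n p G - condTri n p (G.deleteEdges {e})

/-- A `q`-basic graph. -/
def qBasic {V : Type*} [Fintype V] (q : ℕ) (G : SimpleGraph V) : Prop :=
  vT G = q ∧ ∀ e ∈ G.edgeSet, vT (G.deleteEdges {e}) < q

/-- Containment of a `(δ, m)`-near-clique. -/
def containsNearClique {n : ℕ} (H : SimpleGraph (Fin n)) (δ m : ℝ) : Prop :=
  ∃ H' : SimpleGraph (Fin n), H' ≤ H ∧ 0 < edgeCount H' ∧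
    ∀ v : Fin n, (∃ u, H'.Adj v u) →
      (1 - 4 * δ ^ ((1 : ℝ) / 2)) * (2 * m) ^ ((1 : ℝ) / 2) ≤ (deg H' v : ℝ)

/-- Partition function of the exponential random graph model tilted by `exp(b · V_T)`. -/
def ergmZ (n : ℕ) (p b : ℝ) : ℝ :=
  ∑ G : SimpleGraph (Fin n), graphProb n p G * Real.exp (b * vT G)

/-- Probability of an event under the exponential random graph measure. -/
def ergmProb (n : ℕ) (p b : ℝ) (A : Set (SimpleGraph (Fin n))) : ℝ :=
  (∑ G : SimpleGraph (Fin n),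
    if G ∈ A then graphProb n p G * Real.exp (b * vT G) else 0) / ergmZ n p b

/-!
Choose one triangle through each vertex that lies in a triangle. The chosen triangles form a
subgraph with the same value of `vT` and at most `3 * vT G` edges. If `G` is `q`-basic, no edge can
lie outside this subgraph, as deleting it would leave `vT` unchanged.
-/

section

variable {V : Type*} [Fintype V] {G H : SimpleGraph V} {q : ℕ}

/-- The set of vertices lying in at least one triangle, of which `vT` is the cardinality. -/
def triangleVertices (G : SimpleGraph V) : Finset V :=
  {v | ∃ u w, G.Adj v u ∧ G.Adj v w ∧ G.Adj u w}

lemma mem_triangleVertices {v : V} :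
    v ∈ triangleVertices G ↔ ∃ u w, G.Adj v u ∧ G.Adj v w ∧ G.Adj u w :=
  Finset.mem_filter_univ v

lemma card_triangleVertices (G : SimpleGraph V) : #(triangleVertices G) = vT G := rfl

lemma triangleVertices_mono (hle : H ≤ G) : triangleVertices H ⊆ triangleVertices G := by
  intro v hv
  obtain ⟨u, w, hvu, hvw, huw⟩ := mem_triangleVertices.mp hv
  exact mem_triangleVertices.mpr ⟨u, w, hle hvu, hle hvw, hle huw⟩

lemma vT_mono (hle : H ≤ G) : vT H ≤ vT G :=
  card_le_card (triangleVertices_mono hle)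

lemma qBasic.eq_of_le_of_vT_eq (hG : qBasic q G) (hle : H ≤ G) (hH : vT H = q) : H = G := by
  refine le_antisymm hle (SimpleGraph.edgeSet_subset_edgeSet.mp fun e heG ↦ ?_)
  by_contra heH
  have hle_delete : H ≤ G.deleteEdges {e} := by
    rw [← SimpleGraph.edgeSet_subset_edgeSet, SimpleGraph.edgeSet_deleteEdges]
    exact Set.subset_sdiff_singleton (SimpleGraph.edgeSet_mono hle) heH
  exact (hG.2 e heG).not_ge (hH ▸ vT_mono hle_delete)

lemma edgeCount_le_card {E : Finset (Sym2 V)} (hE : G.edgeSet ⊆ E) : edgeCount G ≤ #E :=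
  card_le_card fun e he ↦ hE ((mem_filter_univ e).mp he)

lemma exists_edges_mem_triangleVertices {v : V} (hv : v ∈ triangleVertices G) :
    ∃ E : Finset (Sym2 V), (E : Set (Sym2 V)) ⊆ G.edgeSet ∧ #E ≤ 3 ∧
      v ∈ triangleVertices (SimpleGraph.fromEdgeSet (E : Set (Sym2 V))) := by
  obtain ⟨u, w, hvu, hvw, huw⟩ := mem_triangleVertices.mp hv
  refine ⟨{s(v, u), s(v, w), s(u, w)}, ?_, card_le_three, mem_triangleVertices.mpr ⟨u, w, ?_⟩⟩
  · simp [Set.insert_subset_iff, hvu, hvw, huw]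
  · simp [hvu.ne, hvw.ne, huw.ne]

lemma exists_le_vT_eq_and_edgeCount_le (G : SimpleGraph V) :
    ∃ H ≤ G, vT H = vT G ∧ edgeCount H ≤ 3 * vT G := by
  choose! E hEG hE_card hE using fun v ↦ exists_edges_mem_triangleVertices (G := G) (v := v)
  set F := (triangleVertices G).biUnion E
  have hle : SimpleGraph.fromEdgeSet (F : Set (Sym2 V)) ≤ G := by
    rw [← G.fromEdgeSet_edgeSet]
    refine SimpleGraph.fromEdgeSet_mono ?_
    rw [coe_biUnion]
    exact Set.iUnion₂_subset hEG
  have hsubset :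
      triangleVertices G ⊆ triangleVertices (SimpleGraph.fromEdgeSet (F : Set (Sym2 V))) := by
    intro v hv
    have hEF : (E v : Set (Sym2 V)) ⊆ F := coe_subset.mpr (subset_biUnion_of_mem E hv)
    exact triangleVertices_mono (SimpleGraph.fromEdgeSet_mono hEF) (hE v hv)
  refine ⟨_, hle, (vT_mono hle).antisymm (card_le_card hsubset), ?_⟩
  calc
    edgeCount (SimpleGraph.fromEdgeSet (F : Set (Sym2 V))) ≤ #F := by
      refine edgeCount_le_card ?_
      rw [SimpleGraph.edgeSet_fromEdgeSet]
      exact Set.sdiff_subset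
    _ ≤ #(triangleVertices G) * 3 := card_biUnion_le_card_mul _ E 3 hE_card
    _ = 3 * vT G := by rw [card_triangleVertices, mul_comm]

theorem qBasic_edge_bound_general (hG : qBasic q G) : edgeCount G ≤ 3 * q := by
  obtain ⟨H, hle, hvT, hcard⟩ := exists_le_vT_eq_and_edgeCount_le G
  rw [hG.1] at hvT hcard
  rwa [← hG.eq_of_le_of_vT_eq hle hvT]

end

/-- **Upper bound on edges in `q`-basic graphs.** -/
theorem qBasic_edge_bound {n q : ℕ} (G : SimpleGraph (Fin n)) (h : qBasic q G) :
    edgeCount G ≤ 3 * q :=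
  qBasic_edge_bound_general h
end
end

section
/- Fix λ > 0, set p_n = λ/n, and fix β ≥ 0. Define Z_n(β log n) := E[ exp( β (log n) · V_T(G_{n,p_n}) ) ], and let P_{β log n} be the probability measure on graphs on [n] whose density with respect to the law P of G_{n,p_n} is exp(β (log n) V_T)/Z_n(β log n). Then: (i) lim_{n→∞} (1/(n log n)) · log Z_n(β log n) = max(β − 1/3, 0); (ii) if β < 1/3, then for every ε > 0, lim_{n→∞} P_{β log n}( V_T/n ≥ ε ) = 0; (iii) if β > 1/3, then for every ε > 0, lim_{n→∞} P_{β log n}( V_T/n < 1 − ε ) = 0. -/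
open scoped BigOperators Classical
open Finset Filter

noncomputable section

/-!
A triangle factor of `3 * m` given vertices is present with probability about `n ^ (-3 * m)`, and
for `m` of order `n` there are about `n ^ (2 * m)` of them. A vertex in a triangle thus costs a
factor `n ^ (-1 / 3)`, while the tilt rewards it by `n ^ β`: up to factors exponential in `n`, the
partition function is at least `n ^ ((β - 1 / 3) * v)` both for `v = 0` and for `v = n`.

Conversely, at `β = 1 / 3` the partition function is at most exponential in `n`. In any graph take a
maximal family of edge-disjoint triangles, `a` in number. It covers at most `3 * a` vertices, and by
maximality each of the other vertices in triangles, `c` in number, is joined to both endpoints of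
one of the `3 * a` edges of the family. This configuration has `3 * a + 2 * c` edges, and its union
bound is a binomial sum: each of the at most `n ^ 3` triangles contributes
`n ^ (1 / 3 * 3) * (l / n) ^ 3`, of order `n ^ (-2)`, and each of the at most `3 * a * n`
attachments contributes `n ^ (1 / 3) * (l / n) ^ 2`, at most of order `1 / n`.

For general `β`, the remaining weight `n ^ ((β - 1 / 3) * vT)` is bounded pointwise, on all graphs
for the partition function and on the exceptional event for its probability.
-/

section EdgeSets

variable {V : Type*}

lemma edgeCount_fromEdgeSet [Fintype V] {S : Finset (Sym2 V)} (hS : ∀ e ∈ S, ¬ e.IsDiag) :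
    edgeCount (SimpleGraph.fromEdgeSet (S : Set (Sym2 V))) = #S := by
  unfold edgeCount
  congr 1
  ext e
  simpa using hS e

variable [DecidableEq V]

/-- The edges of the complete graph on the vertex set `t`, that is, the two-element subsets
of `t`. -/
def pairs (t : Finset V) : Finset (Sym2 V) := {e ∈ t.sym2 | ¬ e.IsDiag}

lemma mem_pairs {t : Finset V} {e : Sym2 V} : e ∈ pairs t ↔ (∀ a ∈ e, a ∈ t) ∧ ¬ e.IsDiag := by
  simp [pairs, mem_sym2_iff]

lemma card_pairs (t : Finset V) : #(pairs t) = (#t).choose 2 := by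
  rw [pairs, sym2_eq_image, Sym2.filter_image_mk_not_isDiag, Sym2.card_image_offDiag]

variable [Fintype V]

lemma sum_simpleGraph {M : Type*} [AddCommMonoid M] (φ : SimpleGraph V → M) :
    ∑ G, φ G = ∑ S ∈ (pairs (univ : Finset V)).powerset, φ (SimpleGraph.fromEdgeSet S) := by
  refine sum_bij' (fun G _ ↦ univ.filter (· ∈ G.edgeSet)) (fun S _ ↦ SimpleGraph.fromEdgeSet S)
    (fun G _ ↦ mem_powerset.2 fun e he ↦ mem_pairs.2 ⟨fun _ _ ↦ mem_univ _, ?_⟩)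
    (fun _ _ ↦ mem_univ _) (fun G _ ↦ by simp) (fun S hS ↦ ?_) (fun G _ ↦ by simp)
  · exact G.not_isDiag_of_mem_edgeSet (by simpa using he)
  · ext e
    simpa using fun he ↦ (mem_pairs.1 (mem_powerset.1 hS he)).2

end EdgeSets

section ErdosRenyi

variable {n : ℕ} {p : ℝ}

lemma graphProb_nonneg (hp : 0 ≤ p) (hp1 : p ≤ 1) (G : SimpleGraph (Fin n)) :
    0 ≤ graphProb n p G :=
  mul_nonneg (pow_nonneg hp _) (pow_nonneg (sub_nonneg.2 hp1) _)

lemma graphProb_fromEdgeSet {S : Finset (Sym2 (Fin n))} (hS : S ⊆ pairs univ) :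
    graphProb n p (SimpleGraph.fromEdgeSet S) = p ^ #S * (1 - p) ^ #(pairs univ \ S) := by
  rw [graphProb, edgeCount_fromEdgeSet fun e he ↦ (mem_pairs.1 (hS he)).2,
    card_sdiff_of_subset hS, card_pairs, card_fin]

theorem prob_setOf_le (F : SimpleGraph (Fin n)) : prob n p {G | F ≤ G} = p ^ edgeCount F := by
  have hF : F.edgeSet ⊆ pairs (univ : Finset (Fin n)) := fun e he ↦
    mem_pairs.2 ⟨fun _ _ ↦ mem_univ _, F.not_isDiag_of_mem_edgeSet he⟩
  calc prob n p {G | F ≤ G}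
      = ∑ S ∈ (pairs univ).powerset,
          (∏ _e ∈ S, p) * ∏ e ∈ pairs univ \ S, (if e ∈ F.edgeSet then 0 else 1 - p) := by
        rw [prob, sum_simpleGraph]
        refine sum_congr rfl fun S hS ↦ ?_
        rw [graphProb_fromEdgeSet (mem_powerset.1 hS), prod_const]
        have mem_iff : SimpleGraph.fromEdgeSet S ∈ {G | F ≤ G} ↔ F.edgeSet ⊆ S :=
          SimpleGraph.le_fromEdgeSet_iff _ _
        by_cases h : F.edgeSet ⊆ S
        · rw [prod_congr rfl fun e he ↦ if_neg fun heF ↦ (mem_sdiff.1 he).2 (h heF), prod_const,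
            if_pos (mem_iff.2 h)]
        · obtain ⟨e, heF, heS⟩ := Set.not_subset.1 h
          have hzero : ∏ e ∈ pairs univ \ S, (if e ∈ F.edgeSet then 0 else 1 - p) = 0 :=
            prod_eq_zero (mem_sdiff.2 ⟨hF heF, heS⟩) (if_pos heF)
          rw [hzero, mul_zero, if_neg (mt mem_iff.1 h)]
    _ = ∏ e ∈ pairs univ, (p + if e ∈ F.edgeSet then 0 else 1 - p) := (prod_add _ _ _).symm
    _ = ∏ e ∈ pairs univ, if e ∈ F.edgeSet then p else 1 :=
        prod_congr rfl fun e _ ↦ by split_ifs <;> ring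
    _ = p ^ edgeCount F := by
        rw [prod_ite, prod_const, prod_const_one, mul_one, edgeCount]
        congr 2
        ext e
        simpa using @hF e

lemma sum_graphProb : ∑ G, graphProb n p G = 1 := by
  simpa [prob, edgeCount] using prob_setOf_le (p := p) (⊥ : SimpleGraph (Fin n))

/-- A weighted union bound: on the event that the graph contains `F i`, the value of `f` is
charged to the index `i`. -/
lemma sum_graphProb_mul_le_of_forall_exists_le (hp : 0 ≤ p) (hp1 : p ≤ 1) {ι : Type*}
    {I : Finset ι} {F : ι → SimpleGraph (Fin n)} {w : ι → ℝ} (hw : ∀ i ∈ I, 0 ≤ w i)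
    {f : SimpleGraph (Fin n) → ℝ} (h : ∀ G, ∃ i ∈ I, F i ≤ G ∧ f G ≤ w i) :
    ∑ G, graphProb n p G * f G ≤ ∑ i ∈ I, p ^ edgeCount (F i) * w i := by
  have charge (G : SimpleGraph (Fin n)) :
      graphProb n p G * f G ≤ ∑ i ∈ I, (if F i ≤ G then graphProb n p G else 0) * w i := by
    have hG := graphProb_nonneg hp hp1 G
    obtain ⟨i, hi, hle, hf⟩ := h G
    calc graphProb n p G * f G ≤ (if F i ≤ G then graphProb n p G else 0) * w i := by
          rw [if_pos hle]
          exact mul_le_mul_of_nonneg_left hf hG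
      _ ≤ _ := single_le_sum (f := fun i ↦ (if F i ≤ G then graphProb n p G else 0) * w i)
          (fun j hj ↦ mul_nonneg (by split_ifs <;> positivity) (hw j hj)) hi
  calc ∑ G, graphProb n p G * f G
      ≤ ∑ G, ∑ i ∈ I, (if F i ≤ G then graphProb n p G else 0) * w i :=
        sum_le_sum fun G _ ↦ charge G
    _ = ∑ i ∈ I, prob n p {G | F i ≤ G} * w i := by
        rw [sum_comm]
        exact sum_congr rfl fun i _ ↦ by rw [← sum_mul]; rfl
    _ = ∑ i ∈ I, p ^ edgeCount (F i) * w i := by simp_rw [prob_setOf_le]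

end ErdosRenyi

lemma exists_pairwiseDisjoint_forall_not_disjoint {ι α : Type*}
    (T : Finset ι) (f : ι → Finset α) (hf : ∀ t ∈ T, (f t).Nonempty) :
    ∃ P ⊆ T, (P : Set ι).PairwiseDisjoint f ∧ ∀ t ∈ T, ∃ s ∈ P, ¬ Disjoint (f s) (f t) := by
  obtain ⟨P, hP⟩ := (T.powerset.filter fun P : Finset ι ↦
    (P : Set ι).PairwiseDisjoint f).exists_maximal ⟨∅, by simp⟩
  obtain ⟨hPT, hdisj⟩ := by simpa using hP.prop
  refine ⟨P, hPT, hdisj, fun t ht ↦ ?_⟩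
  by_contra! h
  have hins : insert t P ∈ T.powerset.filter fun P : Finset ι ↦ (P : Set ι).PairwiseDisjoint f := by
    simp only [mem_filter, mem_powerset, insert_subset_iff, coe_insert]
    exact ⟨⟨ht, hPT⟩, hdisj.insert fun s hs _ ↦ (h s hs).symm⟩
  have htP : t ∈ P := hP.le_of_ge hins (subset_insert t P) (mem_insert_self t P)
  exact (hf t ht).ne_empty (disjoint_self.1 (h t htP))

section Skeleton

variable {V : Type*} [DecidableEq V]

/-- The edges joining the apex `q.1` to the endpoints of `q.2`. -/
def wedge (q : V × Sym2 V) : Finset (Sym2 V) := q.2.toFinset.image (s(q.1, ·))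

lemma mem_wedge {x : V} {d e : Sym2 V} : e ∈ wedge (x, d) ↔ ∃ a ∈ d, s(x, a) = e := by
  simp [wedge]

lemma card_wedge {x : V} {d : Sym2 V} (hd : ¬ d.IsDiag) : #(wedge (x, d)) = 2 := by
  rw [wedge, card_image_of_injective _ fun _ _ ↦ Sym2.congr_right.1,
    Sym2.card_toFinset_of_not_isDiag d hd]

/-- The edge set of a union of complete graphs on the members of `P`. -/
def packingEdges (P : Finset (Finset V)) : Finset (Sym2 V) := P.biUnion pairs

/-- The graph made of the triangles in `P` together with the wedges in `Q`. -/
def skeleton (P : Finset (Finset V)) (Q : Finset (V × Sym2 V)) : SimpleGraph V :=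
  SimpleGraph.fromEdgeSet (packingEdges P ∪ Q.biUnion wedge : Finset (Sym2 V))

lemma card_packingEdges_le {P : Finset (Finset V)} (hP : ∀ t ∈ P, #t = 3) :
    #(packingEdges P) ≤ 3 * #P := by
  rw [mul_comm]
  exact card_biUnion_le_card_mul _ _ _ fun t ht ↦ by rw [card_pairs, hP t ht]; rfl

variable {G : SimpleGraph V} {P : Finset (Finset V)} {x : V}

lemma pairs_subset_edgeSet {t : Finset V} (ht : G.IsClique t) : (pairs t : Set _) ⊆ G.edgeSet := by
  intro e
  induction e with | h a b =>
  simpa [mem_pairs] using fun ha hb ↦ ht ha hb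

lemma exists_wedge_of_mem_triangle
    (hP : ∀ t, G.IsNClique 3 t → ∃ s ∈ P, ¬ Disjoint (pairs s) (pairs t))
    (hx : ∃ u w, G.Adj x u ∧ G.Adj x w ∧ G.Adj u w) (hxP : x ∉ P.biUnion id) :
    ∃ e ∈ packingEdges P, (wedge (x, e) : Set (Sym2 V)) ⊆ G.edgeSet := by
  obtain ⟨u, w, hxu, hxw, huw⟩ := hx
  obtain ⟨s, hs, hst⟩ := hP {x, u, w} (SimpleGraph.is3Clique_triple_iff.2 ⟨hxu, hxw, huw⟩)
  obtain ⟨e, hes, het⟩ := not_disjoint_iff.1 hst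
  rw [mem_pairs] at hes het
  refine ⟨e, mem_biUnion.2 ⟨s, hs, mem_pairs.2 hes⟩, fun d hd ↦ ?_⟩
  obtain ⟨a, ha, rfl⟩ := mem_wedge.1 hd
  have hax : a ≠ x := by
    rintro rfl
    exact hxP (mem_biUnion.2 ⟨s, hs, hes.1 a ha⟩)
  have hat := het.1 a ha
  simp only [mem_insert, mem_singleton, hax, false_or] at hat
  rcases hat with rfl | rfl
  exacts [hxu, hxw]

lemma exists_forall_wedge_subset_edgeSet
    (hP : ∀ t, G.IsNClique 3 t → ∃ s ∈ P, ¬ Disjoint (pairs s) (pairs t)) :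
    ∃ g : V → Sym2 V, ∀ x, (∃ u w, G.Adj x u ∧ G.Adj x w ∧ G.Adj u w) → x ∉ P.biUnion id →
      g x ∈ packingEdges P ∧ (wedge (x, g x) : Set (Sym2 V)) ⊆ G.edgeSet := by
  have hexists (x : V) : ∃ e, (∃ u w, G.Adj x u ∧ G.Adj x w ∧ G.Adj u w) → x ∉ P.biUnion id →
      e ∈ packingEdges P ∧ (wedge (x, e) : Set (Sym2 V)) ⊆ G.edgeSet := by
    by_cases hx : (∃ u w, G.Adj x u ∧ G.Adj x w ∧ G.Adj u w) ∧ x ∉ P.biUnion id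
    · obtain ⟨e, he⟩ := exists_wedge_of_mem_triangle hP hx.1 hx.2
      exact ⟨e, fun _ _ ↦ he⟩
    · exact ⟨s(x, x), fun h hxP ↦ (hx ⟨h, hxP⟩).elim⟩
  choose g hg using hexists
  exact ⟨g, hg⟩

lemma card_packingEdges_union_wedges (hP : ∀ t ∈ P, #t = 3)
    (hdisj : (P : Set (Finset V)).PairwiseDisjoint pairs) {W : Finset V} {g : V → Sym2 V}
    (hW : ∀ x ∈ W, x ∉ P.biUnion id) (hg : ∀ x ∈ W, g x ∈ packingEdges P) :
    #(packingEdges P ∪ W.biUnion fun x ↦ wedge (x, g x)) = 3 * #P + 2 * #W := by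
  have mem_support {e : Sym2 V} (he : e ∈ packingEdges P) {a : V} (ha : a ∈ e) :
      a ∈ P.biUnion id := by
    obtain ⟨t, ht, het⟩ := mem_biUnion.1 he
    exact mem_biUnion.2 ⟨t, ht, (mem_pairs.1 het).1 a ha⟩
  rw [card_union_of_disjoint, packingEdges, card_biUnion hdisj, card_biUnion]
  · have not_isDiag {x : V} (hx : x ∈ W) : ¬ (g x).IsDiag := by
      obtain ⟨t, -, ht⟩ := mem_biUnion.1 (hg x hx)
      exact (mem_pairs.1 ht).2
    rw [sum_congr rfl fun t ht ↦ by rw [card_pairs, hP t ht],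
      sum_congr rfl fun x hx ↦ card_wedge (not_isDiag hx)]
    simp [mul_comm]
  · refine fun x hx y hy hxy ↦ disjoint_left.2 fun e hex hey ↦ ?_
    obtain ⟨a, -, rfl⟩ := mem_wedge.1 hex
    obtain ⟨b, hb, hab⟩ := mem_wedge.1 hey
    rcases Sym2.eq_iff.1 hab with ⟨h, -⟩ | ⟨-, rfl⟩
    exacts [hxy h.symm, hW _ hx (mem_support (hg y hy) hb)]
  · refine disjoint_left.2 fun e heP heW ↦ ?_
    obtain ⟨x, hx, hex⟩ := mem_biUnion.1 heW
    obtain ⟨a, -, rfl⟩ := mem_wedge.1 hex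
    exact hW x hx (mem_support heP (Sym2.mem_mk_left x a))

variable [Fintype V]

/-- Take a maximal family `P` of edge-disjoint triangles. It covers at most `3 * #P` vertices, and
by maximality the triangle of any other vertex `x` shares with `P` the edge opposite to `x`. -/
theorem exists_skeleton_le (G : SimpleGraph V) :
    ∃ P ⊆ powersetCard 3 (univ : Finset V), ∃ Q ⊆ univ ×ˢ packingEdges P, skeleton P Q ≤ G ∧
      edgeCount (skeleton P Q) = 3 * #P + 2 * #Q ∧ vT G ≤ 3 * #P + #Q := by
  obtain ⟨P, hPG, hdisj, hmax⟩ := exists_pairwiseDisjoint_forall_not_disjoint (G.cliqueFinset 3)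
    pairs fun t ht ↦ card_pos.1 (by simp [card_pairs, (G.mem_cliqueFinset_iff.1 ht).card_eq])
  simp only [SimpleGraph.mem_cliqueFinset_iff] at hmax
  have hclique {t : Finset V} (ht : t ∈ P) : G.IsNClique 3 t := G.mem_cliqueFinset_iff.1 (hPG ht)
  have hP : ∀ t ∈ P, #t = 3 := fun t ht ↦ (hclique ht).card_eq
  set T : Finset V := {x | ∃ u w, G.Adj x u ∧ G.Adj x w ∧ G.Adj u w} with hT
  set W : Finset V := T \ P.biUnion id
  have hWP : ∀ x ∈ W, x ∉ P.biUnion id := fun x hx ↦ (mem_sdiff.1 hx).2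
  obtain ⟨g, hattach⟩ := exists_forall_wedge_subset_edgeSet hmax
  have hg : ∀ x ∈ W, g x ∈ packingEdges P ∧ (wedge (x, g x) : Set (Sym2 V)) ⊆ G.edgeSet :=
    fun x hx ↦ hattach x ((mem_filter_univ x).1 (mem_sdiff.1 hx).1) (hWP x hx)
  have hsub : ((packingEdges P ∪ W.biUnion fun x ↦ wedge (x, g x) : Finset (Sym2 V)) : Set _) ⊆
      G.edgeSet := by
    simp only [packingEdges, coe_union, coe_biUnion, Set.union_subset_iff, Set.iUnion_subset_iff]
    exact ⟨fun t ht ↦ pairs_subset_edgeSet (hclique ht).isClique, fun x hx ↦ (hg x hx).2⟩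
  have hcardW : #(W.image fun x ↦ (x, g x)) = #W :=
    card_image_of_injective _ fun _ _ h ↦ (Prod.ext_iff.1 h).1
  refine ⟨P, fun t ht ↦ by simp [mem_powersetCard, hP t ht], W.image fun x ↦ (x, g x), ?_, ?_⟩
  · exact image_subset_iff.2 fun x hx ↦ mem_product.2 ⟨mem_univ x, (hg x hx).1⟩
  rw [skeleton, image_biUnion, hcardW, edgeCount_fromEdgeSet
    fun e he ↦ G.not_isDiag_of_mem_edgeSet (hsub he)]
  refine ⟨?_, card_packingEdges_union_wedges hP hdisj hWP fun x hx ↦ (hg x hx).1, ?_⟩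
  · exact (SimpleGraph.fromEdgeSet_mono hsub).trans_eq G.fromEdgeSet_edgeSet
  · calc vT G = #T := by rw [hT, vT]
      _ ≤ #(P.biUnion id) + #W := by
        rw [add_comm]; exact card_le_card_sdiff_add_card
      _ ≤ 3 * #P + #W := by
        gcongr
        rw [mul_comm]
        exact card_biUnion_le_card_mul _ _ _ fun t ht ↦ (hP t ht).le

end Skeleton

section UpperBound

variable {n : ℕ}

lemma sum_powerset_pow_card {α R : Type*} [CommSemiring R] (s : Finset α) (x : R) :
    ∑ t ∈ s.powerset, x ^ #t = (1 + x) ^ #s := by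
  simpa [add_comm] using sum_pow_mul_eq_add_pow x 1 s

lemma sum_skeleton_weight_le {P : Finset (Finset (Fin n))} (hP : ∀ t ∈ P, #t = 3) {p : ℝ}
    (hp : 0 ≤ p) (b : ℝ) :
    ∑ Q ∈ ((univ : Finset (Fin n)) ×ˢ packingEdges P).powerset,
        p ^ (3 * #P + 2 * #Q) * Real.exp (b * (3 * #P + #Q)) ≤
      ((Real.exp b * p) ^ 3) ^ #P * ((1 + Real.exp b * p ^ 2) ^ (3 * n)) ^ #P := by
  have hsplit (Q : Finset (Fin n × Sym2 (Fin n))) :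
      p ^ (3 * #P + 2 * #Q) * Real.exp (b * (3 * #P + #Q)) =
        ((Real.exp b * p) ^ 3) ^ #P * (Real.exp b * p ^ 2) ^ #Q := by
    rw [show b * (3 * #P + #Q) = (3 * #P + #Q : ℕ) * b by push_cast; ring, Real.exp_nat_mul]
    ring
  simp_rw [hsplit, ← mul_sum, sum_powerset_pow_card]
  rw [card_product, card_univ, Fintype.card_fin, ← pow_mul (1 + _)]
  have hcard : n * #(packingEdges P) ≤ 3 * n * #P := by
    linarith [Nat.mul_le_mul_left n (card_packingEdges_le hP)]
  gcongr ?_ * ?_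
  exact pow_le_pow_right₀ (le_add_of_nonneg_right (by positivity)) hcard

theorem ergmZ_le {p b : ℝ} (hp : 0 ≤ p) (hp1 : p ≤ 1) (hb : 0 ≤ b) :
    ergmZ n p b ≤
      (1 + (Real.exp b * p) ^ 3 * (1 + Real.exp b * p ^ 2) ^ (3 * n)) ^ n.choose 3 := by
  set T : Finset (Finset (Fin n)) := powersetCard 3 univ with hT
  set I : Finset (Σ _ : Finset (Finset (Fin n)), Finset (Fin n × Sym2 (Fin n))) :=
    T.powerset.sigma fun P ↦ (univ ×ˢ packingEdges P).powerset
  set J := {i ∈ I | edgeCount (skeleton i.1 i.2) = 3 * #i.1 + 2 * #i.2}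
  have hcover (G : SimpleGraph (Fin n)) : ∃ i ∈ J, skeleton i.1 i.2 ≤ G ∧
      Real.exp (b * vT G) ≤ Real.exp (b * (3 * #i.1 + #i.2)) := by
    obtain ⟨P, hP, Q, hQ, hle, hcard, hvT⟩ := exists_skeleton_le G
    refine ⟨⟨P, Q⟩, mem_filter.2 ⟨mem_sigma.2 ⟨mem_powerset.2 hP, mem_powerset.2 hQ⟩, hcard⟩,
      hle, ?_⟩
    gcongr
    exact_mod_cast hvT
  calc ergmZ n p b
      ≤ ∑ i ∈ J, p ^ edgeCount (skeleton i.1 i.2) * Real.exp (b * (3 * #i.1 + #i.2)) :=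
        sum_graphProb_mul_le_of_forall_exists_le hp hp1 (fun _ _ ↦ (Real.exp_pos _).le) hcover
    _ = ∑ i ∈ J, p ^ (3 * #i.1 + 2 * #i.2) * Real.exp (b * (3 * #i.1 + #i.2)) :=
        sum_congr rfl fun i hi ↦ by rw [(mem_filter.1 hi).2]
    _ ≤ ∑ i ∈ I, p ^ (3 * #i.1 + 2 * #i.2) * Real.exp (b * (3 * #i.1 + #i.2)) :=
        sum_le_sum_of_subset_of_nonneg (filter_subset _ _) fun _ _ _ ↦ by positivity
    _ ≤ ∑ P ∈ T.powerset,
          ((Real.exp b * p) ^ 3) ^ #P * ((1 + Real.exp b * p ^ 2) ^ (3 * n)) ^ #P := by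
        rw [sum_sigma]
        exact sum_le_sum fun P hP ↦ sum_skeleton_weight_le
          (fun t ht ↦ (mem_powersetCard.1 (mem_powerset.1 hP ht)).2) hp b
    _ = _ := by
        simp_rw [← mul_pow, sum_powerset_pow_card, hT, card_powersetCard, card_univ,
          Fintype.card_fin]

lemma one_add_pow_le_exp_mul {x : ℝ} (hx : 0 ≤ x) (k : ℕ) : (1 + x) ^ k ≤ Real.exp (k * x) := by
  rw [Real.exp_nat_mul]
  gcongr
  linarith [Real.add_one_le_exp x]

theorem ergmZ_critical_le {l : ℝ} (hl : 0 ≤ l) (hln : l ≤ n) (hn : 1 ≤ n) :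
    ergmZ n (l / n) (1 / 3 * Real.log n) ≤ Real.exp (n * (l ^ 3 * Real.exp (3 * l ^ 2))) := by
  have hn0 : (0 : ℝ) < n := by exact_mod_cast hn
  set E : ℝ := Real.exp (1 / 3 * Real.log n) with hE
  have hEcube : E ^ 3 = n := by
    rw [hE, ← Real.exp_nat_mul, show (3 : ℕ) * (1 / 3 * Real.log n) = Real.log n by push_cast; ring,
      Real.exp_log hn0]
  have hEn : E ≤ n := by
    rw [hE, ← Real.le_log_iff_exp_le hn0]
    linarith [Real.log_natCast_nonneg n]
  have htriangle : (E * (l / n)) ^ 3 = l ^ 3 / n ^ 2 := by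
    rw [mul_pow, hEcube]
    field_simp
  have hwedges : (1 + E * (l / n) ^ 2) ^ (3 * n) ≤ Real.exp (3 * l ^ 2) := by
    calc (1 + E * (l / n) ^ 2) ^ (3 * n) ≤ (1 + n * (l / n) ^ 2) ^ (3 * n) := by gcongr
      _ ≤ Real.exp ((3 * n : ℕ) * (n * (l / n) ^ 2)) := one_add_pow_le_exp_mul (by positivity) _
      _ = Real.exp (3 * l ^ 2) := by push_cast; field_simp
  calc ergmZ n (l / n) (1 / 3 * Real.log n)
      ≤ (1 + (E * (l / n)) ^ 3 * (1 + E * (l / n) ^ 2) ^ (3 * n)) ^ n.choose 3 :=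
        ergmZ_le (by positivity) ((div_le_one hn0).2 hln)
          (mul_nonneg (by norm_num) (Real.log_natCast_nonneg n))
    _ ≤ (1 + l ^ 3 / n ^ 2 * Real.exp (3 * l ^ 2)) ^ n.choose 3 := by
        rw [htriangle]
        gcongr
    _ ≤ (1 + l ^ 3 / n ^ 2 * Real.exp (3 * l ^ 2)) ^ n ^ 3 :=
        pow_le_pow_right₀ (le_add_of_nonneg_right (by positivity)) (n.choose_le_pow 3)
    _ ≤ Real.exp ((n ^ 3 : ℕ) * (l ^ 3 / n ^ 2 * Real.exp (3 * l ^ 2))) :=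
        one_add_pow_le_exp_mul (by positivity) _
    _ = Real.exp (n * (l ^ 3 * Real.exp (3 * l ^ 2))) := by
        push_cast
        field_simp

end UpperBound

section TriangleFactors

section Map

variable {V W : Type*} [Fintype V] [Fintype W] (G : SimpleGraph V) (f : V ↪ W)

lemma edgeCount_eq_card_edgeFinset [Fintype G.edgeSet] : edgeCount G = #G.edgeFinset := by
  unfold edgeCount
  congr 1
  ext e
  simp

lemma edgeCount_map : edgeCount (G.map f) = edgeCount G := by
  unfold edgeCount
  rw [← card_map f.sym2Map]
  congr 1
  ext e
  simp [SimpleGraph.edgeSet_map]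

lemma vT_map : vT (G.map f) = vT G := by
  unfold vT
  rw [← card_map f]
  congr 1
  ext v
  simp only [mem_filter_univ, Finset.mem_map, SimpleGraph.map_adj]
  constructor
  · rintro ⟨_, _, ⟨v, u, hvu, rfl, rfl⟩, ⟨v', w, hvw, hv, rfl⟩, ⟨u', w', huw, hu, hw⟩⟩
    rw [f.injective hv] at hvw
    rw [f.injective hu, f.injective hw] at huw
    exact ⟨v, ⟨u, w, hvu, hvw, huw⟩, rfl⟩
  · rintro ⟨v, ⟨u, w, hvu, hvw, huw⟩, rfl⟩
    exact ⟨f u, f w, ⟨v, u, hvu, rfl, rfl⟩, ⟨v, w, hvw, rfl, rfl⟩, ⟨u, w, huw, rfl, rfl⟩⟩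

end Map

variable {α : Type*}

/-- The disjoint union of triangles on `Fin 3 × α` whose vertices are the points with a common
label, where the point `(i, a)` has label `σ i a`. -/
def triangleFactor (σ : Fin 3 → Equiv.Perm α) : SimpleGraph (Fin 3 × α) where
  Adj x y := x.1 ≠ y.1 ∧ σ x.1 x.2 = σ y.1 y.2
  symm := ⟨fun _ _ h ↦ ⟨h.1.symm, h.2.symm⟩⟩
  loopless := ⟨fun _ h ↦ h.1 rfl⟩

lemma triangleFactor_adj {σ : Fin 3 → Equiv.Perm α} {x y : Fin 3 × α} :
    (triangleFactor σ).Adj x y ↔ x.1 ≠ y.1 ∧ σ x.1 x.2 = σ y.1 y.2 := Iff.rfl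

lemma triangleFactor_cons_injective :
    Function.Injective fun τ : Fin 2 → Equiv.Perm α ↦ triangleFactor (Fin.cons 1 τ) := by
  intro τ τ' h
  ext i a
  have hadj : (triangleFactor (Fin.cons 1 τ)).Adj (0, τ i a) (i.succ, a) :=
    ⟨(Fin.succ_ne_zero i).symm, by simp⟩
  have hadj' : (triangleFactor (Fin.cons 1 τ')).Adj (0, τ i a) (i.succ, a) :=
    congr_arg SimpleGraph.Adj h ▸ hadj
  simpa using hadj'.2

variable [Fintype α] (σ : Fin 3 → Equiv.Perm α)

lemma degree_triangleFactor (x : Fin 3 × α) : (triangleFactor σ).degree x = 2 := by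
  have hnbr : (triangleFactor σ).neighborFinset x =
      ({x.1}ᶜ : Finset (Fin 3)).image fun i ↦ (i, (σ i).symm (σ x.1 x.2)) := by
    ext ⟨i, a⟩
    simp [triangleFactor_adj, Equiv.symm_apply_eq, eq_comm (a := i)]
  rw [SimpleGraph.degree, hnbr,
    card_image_of_injective _ fun _ _ h ↦ (Prod.ext_iff.1 h).1, card_compl, card_singleton,
    Fintype.card_fin]

lemma edgeCount_triangleFactor : edgeCount (triangleFactor σ) = 3 * Fintype.card α := by
  have h := (triangleFactor σ).sum_degrees_eq_twice_card_edges
  simp only [degree_triangleFactor, sum_const, card_univ, Fintype.card_prod, Fintype.card_fin,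
    smul_eq_mul] at h
  rw [edgeCount_eq_card_edgeFinset]
  lia

lemma vT_triangleFactor : vT (triangleFactor σ) = 3 * Fintype.card α := by
  have hall (x : Fin 3 × α) : ∃ u w, (triangleFactor σ).Adj x u ∧ (triangleFactor σ).Adj x w ∧
      (triangleFactor σ).Adj u w := by
    obtain ⟨i, j, hi, hj, hij⟩ : ∃ i j, x.1 ≠ i ∧ x.1 ≠ j ∧ i ≠ j := by
      generalize x.1 = k
      decide +revert
    exact ⟨(i, (σ i).symm (σ x.1 x.2)), (j, (σ j).symm (σ x.1 x.2)), by
      simpa [triangleFactor_adj] using ⟨hi, hj, hij⟩⟩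
  rw [vT, filter_true_of_mem fun x _ ↦ hall x, card_univ, Fintype.card_prod, Fintype.card_fin]

end TriangleFactors

section LowerBound

variable {n m : ℕ}

theorem le_ergmZ {p : ℝ} (hp : 0 ≤ p) (hp1 : p ≤ 1) (b : ℝ) (hm : 3 * m ≤ n) :
    (m.factorial : ℝ) ^ 2 *
      (p ^ (3 * m) * (1 - p) ^ (n.choose 2 - 3 * m) * Real.exp (b * (3 * m : ℕ))) ≤
      ergmZ n p b := by
  let e : Fin 3 × Fin m ↪ Fin n := finProdFinEquiv.toEmbedding.trans (Fin.castLEEmb hm)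
  let F : (Fin 2 → Equiv.Perm (Fin m)) ↪ SimpleGraph (Fin n) :=
    ⟨fun τ ↦ (triangleFactor (Fin.cons 1 τ)).map e,
      (SimpleGraph.map_injective e).comp triangleFactor_cons_injective⟩
  have hedge (τ) : edgeCount (F τ) = 3 * m := by
    simp [F, edgeCount_map, edgeCount_triangleFactor]
  have hvT (τ) : vT (F τ) = 3 * m := by
    simp [F, vT_map, vT_triangleFactor]
  calc (m.factorial : ℝ) ^ 2 *
        (p ^ (3 * m) * (1 - p) ^ (n.choose 2 - 3 * m) * Real.exp (b * (3 * m : ℕ)))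
      = ∑ τ, graphProb n p (F τ) * Real.exp (b * vT (F τ)) := by
        simp [graphProb, hedge, hvT, Fintype.card_perm]
    _ = ∑ G ∈ univ.map F, graphProb n p G * Real.exp (b * vT G) := by rw [sum_map]
    _ ≤ ergmZ n p b := sum_le_sum_of_subset_of_nonneg (subset_univ _) fun G _ _ ↦
        mul_nonneg (graphProb_nonneg hp hp1 G) (Real.exp_pos _).le

lemma exp_neg_two_mul_le_one_sub {x : ℝ} (hx0 : 0 ≤ x) (hx : x ≤ 1 / 2) :
    Real.exp (-(2 * x)) ≤ 1 - x := by
  rw [Real.exp_neg, inv_le_iff_one_le_mul₀ (Real.exp_pos _)]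
  nlinarith [Real.add_one_le_exp (2 * x)]

lemma exp_mul_log_sub_le_factorial {x : ℝ} (hx : 0 < x) (m : ℕ) :
    Real.exp (m * Real.log x - x) ≤ m.factorial := by
  rw [Real.exp_sub, Real.exp_nat_mul, Real.exp_log hx,
    div_le_comm₀ (by positivity) (by positivity)]
  exact Real.pow_div_factorial_le_exp x hx.le m

lemma exp_le_ergmZ {l : ℝ} (hl : 0 < l) (β : ℝ) (hln : 2 * l ≤ n) (hm : 3 * m ≤ n) :
    Real.exp ((β - 1 / 3) * (3 * m) * Real.log n - (2 + |Real.log l| + 2 * l) * n) ≤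
      ergmZ n (l / n) (β * Real.log n) := by
  have hn0 : (0 : ℝ) < n := by linarith
  have hp : l / n ≤ 1 / 2 := by
    rw [div_le_iff₀ hn0]
    linarith
  have hmn : 3 * (m : ℝ) ≤ n := by exact_mod_cast hm
  have hpresent : Real.exp (-(|Real.log l| * n) - 3 * m * Real.log n) ≤ (l / n) ^ (3 * m) := by
    rw [← Real.exp_log (div_pos hl hn0), ← Real.exp_nat_mul, Real.log_div hl.ne' hn0.ne']
    gcongr
    push_cast
    nlinarith [neg_abs_le (Real.log l), abs_nonneg (Real.log l)]
  have habsent : Real.exp (-(2 * l * n)) ≤ (1 - l / n) ^ (n.choose 2 - 3 * m) := by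
    calc Real.exp (-(2 * l * n)) = Real.exp (-(2 * (l / n))) ^ (n ^ 2) := by
          rw [← Real.exp_nat_mul]
          push_cast
          field_simp
      _ ≤ (1 - l / n) ^ (n ^ 2) := by
          gcongr
          exact exp_neg_two_mul_le_one_sub (by positivity) hp
      _ ≤ (1 - l / n) ^ (n.choose 2 - 3 * m) :=
          pow_le_pow_of_le_one (by linarith) (by linarith [div_pos hl hn0])
            ((Nat.sub_le _ _).trans (n.choose_le_pow 2))
  calc Real.exp ((β - 1 / 3) * (3 * m) * Real.log n - (2 + |Real.log l| + 2 * l) * n)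
      = Real.exp (m * Real.log n - n) ^ 2 * (Real.exp (-(|Real.log l| * n) - 3 * m * Real.log n) *
          Real.exp (-(2 * l * n)) * Real.exp (β * Real.log n * (3 * m : ℕ))) := by
        rw [← Real.exp_nat_mul, ← Real.exp_add, ← Real.exp_add, ← Real.exp_add]
        congr 1
        push_cast
        ring
    _ ≤ (m.factorial : ℝ) ^ 2 * ((l / n) ^ (3 * m) * (1 - l / n) ^ (n.choose 2 - 3 * m) *
          Real.exp (β * Real.log n * (3 * m : ℕ))) := by
        gcongr
        exact exp_mul_log_sub_le_factorial hn0 m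
    _ ≤ ergmZ n (l / n) (β * Real.log n) := le_ergmZ (by positivity) (by linarith) _ hm

theorem exists_eventually_exp_le_ergmZ {l : ℝ} (hl : 0 < l) (β : ℝ) :
    ∃ C : ℝ, ∀ᶠ n : ℕ in atTop,
      Real.exp (max (β - 1 / 3) 0 * (n * Real.log n) - C * n) ≤
        ergmZ n (l / n) (β * Real.log n) := by
  refine ⟨2 + |Real.log l| + 2 * l + 2 * |β - 1 / 3|, ?_⟩
  filter_upwards [eventually_ge_atTop ⌈2 * l⌉₊] with n hln
  have hlog : 0 ≤ Real.log n := Real.log_natCast_nonneg n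
  have hlog_le : Real.log n ≤ n := Real.log_le_self n.cast_nonneg
  obtain ⟨m, hm, hle⟩ : ∃ m : ℕ, 3 * m ≤ n ∧
      max (β - 1 / 3) 0 * n ≤ (β - 1 / 3) * (3 * m) + 2 * |β - 1 / 3| := by
    rcases le_total (β - 1 / 3) 0 with hβ | hβ
    · exact ⟨0, by simp, by rw [max_eq_right hβ]; simp⟩
    · have hdiv : (n : ℝ) ≤ 3 * (n / 3 : ℕ) + 2 := by exact_mod_cast (by lia)
      refine ⟨n / 3, by lia, ?_⟩
      rw [max_eq_left hβ, abs_of_nonneg hβ]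
      nlinarith
  refine le_trans (Real.exp_le_exp.2 ?_) (exp_le_ergmZ hl β (Nat.ceil_le.1 hln) hm)
  nlinarith [mul_le_mul_of_nonneg_right hle hlog,
    mul_le_mul_of_nonneg_left hlog_le (abs_nonneg (β - 1 / 3))]

end LowerBound

section Tilting

variable {n : ℕ}

lemma vT_le (G : SimpleGraph (Fin n)) : vT G ≤ n :=
  (card_le_univ _).trans_eq (Fintype.card_fin n)

lemma ergmZ_pos {p : ℝ} (hp : 0 ≤ p) (hp1 : p ≤ 1) (b : ℝ) : 0 < ergmZ n p b := by
  obtain ⟨G, -, hG⟩ : ∃ G ∈ univ, 0 < graphProb n p G :=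
    exists_lt_of_sum_lt (by simp [sum_graphProb])
  exact sum_pos' (fun G _ ↦ mul_nonneg (graphProb_nonneg hp hp1 G) (Real.exp_pos _).le)
    ⟨G, mem_univ G, mul_pos hG (Real.exp_pos _)⟩

lemma ergmProb_nonneg {p : ℝ} (hp : 0 ≤ p) (hp1 : p ≤ 1) (b : ℝ)
    (A : Set (SimpleGraph (Fin n))) : 0 ≤ ergmProb n p b A :=
  div_nonneg (sum_nonneg fun G _ ↦ by
    have := graphProb_nonneg hp hp1 G
    split_ifs <;> positivity) (ergmZ_pos hp hp1 b).le

lemma ergmProb_univ {p : ℝ} (hp : 0 ≤ p) (hp1 : p ≤ 1) (b : ℝ) :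
    ergmProb n p b Set.univ = 1 := by
  have hZ := (ergmZ_pos (n := n) hp hp1 b).ne'
  simpa [ergmProb, ergmZ] using div_self hZ

lemma ergmProb_mul_ergmZ_le {p b b' c : ℝ} (hp : 0 ≤ p) (hp1 : p ≤ 1)
    {A : Set (SimpleGraph (Fin n))} (hA : ∀ G ∈ A, b * vT G ≤ b' * vT G + c) :
    ergmProb n p b A * ergmZ n p b ≤ Real.exp c * ergmZ n p b' := by
  rw [ergmProb, div_mul_cancel₀ _ (ergmZ_pos hp hp1 b).ne', ergmZ, mul_sum]
  refine sum_le_sum fun G _ ↦ ?_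
  have hG := graphProb_nonneg hp hp1 G
  split_ifs with h
  · calc graphProb n p G * Real.exp (b * vT G)
        ≤ graphProb n p G * Real.exp (b' * vT G + c) := by
          gcongr
          exact hA G h
      _ = Real.exp c * (graphProb n p G * Real.exp (b' * vT G)) := by
          rw [Real.exp_add]
          ring
  · positivity

end Tilting

section Asymptotics

variable {l : ℝ}

lemma eventually_div_natCast_mem_Icc (hl : 0 ≤ l) :
    ∀ᶠ n : ℕ in atTop, l / n ∈ Set.Icc (0 : ℝ) 1 := by
  filter_upwards [eventually_ge_atTop ⌈l⌉₊] with n hn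
  exact ⟨by positivity, div_le_one_of_le₀ (Nat.ceil_le.1 hn) n.cast_nonneg⟩

/-- The tilt `β` is compared with the critical tilt `1 / 3`, at which the partition function is
at most exponential in `n`. -/
theorem exists_eventually_ergmProb_mul_ergmZ_le (hl : 0 ≤ l) (β : ℝ) :
    ∃ C : ℝ, ∀ᶠ n : ℕ in atTop, ∀ (A : Set (SimpleGraph (Fin n))) (s : ℝ),
      (∀ G ∈ A, (β - 1 / 3) * vT G ≤ s * n) →
      ergmProb n (l / n) (β * Real.log n) A * ergmZ n (l / n) (β * Real.log n) ≤
        Real.exp (s * (n * Real.log n) + C * n) := by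
  refine ⟨l ^ 3 * Real.exp (3 * l ^ 2), ?_⟩
  filter_upwards [eventually_div_natCast_mem_Icc hl, eventually_ge_atTop 1,
    eventually_ge_atTop ⌈l⌉₊] with n hp hn hln A s hA
  have htilt (G) (hG : G ∈ A) :
      β * Real.log n * vT G ≤ 1 / 3 * Real.log n * vT G + s * (n * Real.log n) := by
    nlinarith [mul_le_mul_of_nonneg_right (hA G hG) (Real.log_natCast_nonneg n)]
  calc ergmProb n (l / n) (β * Real.log n) A * ergmZ n (l / n) (β * Real.log n)
      ≤ Real.exp (s * (n * Real.log n)) * ergmZ n (l / n) (1 / 3 * Real.log n) :=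
        ergmProb_mul_ergmZ_le hp.1 hp.2 htilt
    _ ≤ Real.exp (s * (n * Real.log n)) * Real.exp (n * (l ^ 3 * Real.exp (3 * l ^ 2))) := by
        gcongr
        exact ergmZ_critical_le hl (Nat.ceil_le.1 hln) hn
    _ = _ := by
        rw [← Real.exp_add]
        ring_nf

theorem exists_eventually_abs_log_ergmZ_sub_le (hl : 0 < l) (β : ℝ) :
    ∃ C : ℝ, ∀ᶠ n : ℕ in atTop,
      |Real.log (ergmZ n (l / n) (β * Real.log n)) - max (β - 1 / 3) 0 * (n * Real.log n)| ≤
        C * n := by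
  obtain ⟨C, hlower⟩ := exists_eventually_exp_le_ergmZ hl β
  obtain ⟨D, hupper⟩ := exists_eventually_ergmProb_mul_ergmZ_le hl.le β
  refine ⟨max C D, ?_⟩
  filter_upwards [hlower, hupper, eventually_div_natCast_mem_Icc hl.le] with n hlower hupper hp
  have hZ := ergmZ_pos (n := n) hp.1 hp.2 (β * Real.log n)
  have hrate (G : SimpleGraph (Fin n)) : (β - 1 / 3) * vT G ≤ max (β - 1 / 3) 0 * n := by
    gcongr
    · exact le_max_left _ _
    · exact vT_le G
  specialize hupper Set.univ _ fun G _ ↦ hrate G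
  rw [ergmProb_univ hp.1 hp.2, one_mul, ← Real.log_le_iff_le_exp hZ] at hupper
  rw [← Real.le_log_iff_exp_le hZ] at hlower
  have hC : C * n ≤ max C D * n := by gcongr; exact le_max_left _ _
  have hD : D * n ≤ max C D * n := by gcongr; exact le_max_right _ _
  exact abs_le.2 ⟨by linarith, by linarith⟩

lemma tendsto_div_mul_log_of_abs_sub_le {f : ℕ → ℝ} {θ C : ℝ}
    (h : ∀ᶠ n : ℕ in atTop, |f n - θ * (n * Real.log n)| ≤ C * n) :
    Tendsto (fun n : ℕ ↦ f n / (n * Real.log n)) atTop (nhds θ) := by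
  have hlog : Tendsto (fun n : ℕ ↦ C / Real.log n) atTop (nhds 0) :=
    (Real.tendsto_log_atTop.comp tendsto_natCast_atTop_atTop).const_div_atTop C
  refine tendsto_iff_norm_sub_tendsto_zero.2
    (squeeze_zero' (.of_forall fun _ ↦ norm_nonneg _) ?_ hlog)
  filter_upwards [h, eventually_ge_atTop 2] with n hn hn2
  have hlog0 : 0 < Real.log n := Real.log_pos (by exact_mod_cast hn2)
  have hpos : 0 < n * Real.log n := by positivity
  calc ‖f n / (n * Real.log n) - θ‖ = |f n - θ * (n * Real.log n)| / (n * Real.log n) := by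
        rw [Real.norm_eq_abs, div_sub' hpos.ne', abs_div, abs_of_pos hpos, mul_comm θ]
    _ ≤ C * n / (n * Real.log n) := by gcongr
    _ = C / Real.log n := by field_simp

lemma tendsto_exp_mul_log_add {d : ℝ} (hd : d < 0) (C : ℝ) :
    Tendsto (fun n : ℕ ↦ Real.exp (d * (n * Real.log n) + C * n)) atTop (nhds 0) := by
  have hlog : Tendsto (fun n : ℕ ↦ d * Real.log n + C) atTop atBot :=
    tendsto_atBot_add_const_right _ C
      ((Real.tendsto_log_atTop.comp tendsto_natCast_atTop_atTop).const_mul_atTop_of_neg hd)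
  refine Real.tendsto_exp_atBot.comp
    ((tendsto_natCast_atTop_atTop.atTop_mul_atBot₀ hlog).congr fun n ↦ ?_)
  ring

theorem tendsto_ergmProb_zero (hl : 0 < l) {β s : ℝ} (hs : s < max (β - 1 / 3) 0)
    {A : ∀ n : ℕ, Set (SimpleGraph (Fin n))}
    (hA : ∀ᶠ n in atTop, ∀ G ∈ A n, (β - 1 / 3) * vT G ≤ s * n) :
    Tendsto (fun n : ℕ ↦ ergmProb n (l / n) (β * Real.log n) (A n)) atTop (nhds 0) := by
  obtain ⟨C, hlower⟩ := exists_eventually_exp_le_ergmZ hl β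
  obtain ⟨D, hupper⟩ := exists_eventually_ergmProb_mul_ergmZ_le hl.le β
  have hp := eventually_div_natCast_mem_Icc hl.le
  refine squeeze_zero' (hp.mono fun n hp ↦ ergmProb_nonneg hp.1 hp.2 _ _) ?_
    (tendsto_exp_mul_log_add (sub_neg.2 hs) (C + D))
  filter_upwards [hlower, hupper, hp, hA] with n hlower hupper hp hA
  set θ := max (β - 1 / 3) 0
  refine le_of_mul_le_mul_right ?_ (Real.exp_pos (θ * (n * Real.log n) - C * n))
  calc ergmProb n (l / n) (β * Real.log n) (A n) * Real.exp (θ * (n * Real.log n) - C * n)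
      ≤ ergmProb n (l / n) (β * Real.log n) (A n) * ergmZ n (l / n) (β * Real.log n) :=
        mul_le_mul_of_nonneg_left hlower (ergmProb_nonneg hp.1 hp.2 _ _)
    _ ≤ Real.exp (s * (n * Real.log n) + D * n) := hupper _ s hA
    _ = Real.exp ((s - θ) * (n * Real.log n) + (C + D) * n) *
          Real.exp (θ * (n * Real.log n) - C * n) := by
        rw [← Real.exp_add]
        ring_nf

end Asymptotics

theorem ergm_phase_transition_general (l β : ℝ) (hl : 0 < l) :
    Tendsto (fun n : ℕ ↦
        Real.log (ergmZ n (l / n) (β * Real.log n)) / ((n : ℝ) * Real.log n))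
      atTop (nhds (max (β - 1 / 3) 0)) ∧
    (β < 1 / 3 → ∀ ε : ℝ, 0 < ε →
      Tendsto (fun n : ℕ ↦
          ergmProb n (l / n) (β * Real.log n) {G | ε ≤ (vT G : ℝ) / n})
        atTop (nhds 0)) ∧
    (1 / 3 < β → ∀ ε : ℝ, 0 < ε →
      Tendsto (fun n : ℕ ↦
          ergmProb n (l / n) (β * Real.log n) {G | (vT G : ℝ) / n < 1 - ε})
        atTop (nhds 0)) := by
  refine ⟨?_, fun hβ ε hε ↦ ?_, fun hβ ε hε ↦ ?_⟩
  · obtain ⟨C, hC⟩ := exists_eventually_abs_log_ergmZ_sub_le hl β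
    exact tendsto_div_mul_log_of_abs_sub_le hC
  · have hrate : (β - 1 / 3) * ε < max (β - 1 / 3) 0 :=
      (mul_neg_of_neg_of_pos (sub_neg.2 hβ) hε).trans_le (le_max_right _ _)
    refine tendsto_ergmProb_zero hl hrate ?_
    filter_upwards [eventually_gt_atTop 0] with n hn G hG
    have hvT : ε * n ≤ vT G := (le_div_iff₀ (Nat.cast_pos.2 hn)).1 hG
    nlinarith
  · have hrate : (β - 1 / 3) * (1 - ε) < max (β - 1 / 3) 0 :=
      lt_max_of_lt_left (mul_lt_of_lt_one_right (sub_pos.2 hβ) (sub_lt_self 1 hε))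
    refine tendsto_ergmProb_zero hl hrate ?_
    filter_upwards [eventually_gt_atTop 0] with n hn G hG
    have hvT : vT G < (1 - ε) * n := (div_lt_iff₀ (Nat.cast_pos.2 hn)).1 hG
    nlinarith

/-- **Phase transition in the exponential random graph tilted by the
number of vertices in triangles.** -/
theorem ergm_phase_transition (l β : ℝ) (hl : 0 < l) (hβ : 0 ≤ β) :
    Tendsto (fun n : ℕ =>
        Real.log (ergmZ n (l / n) (β * Real.log n)) / ((n : ℝ) * Real.log n))
      atTop (nhds (max (β - 1 / 3) 0)) ∧
    (β < 1 / 3 → ∀ ε : ℝ, 0 < ε →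
      Tendsto (fun n : ℕ =>
          ergmProb n (l / n) (β * Real.log n) {G | ε ≤ (vT G : ℝ) / n})
        atTop (nhds 0)) ∧
    (1 / 3 < β → ∀ ε : ℝ, 0 < ε →
      Tendsto (fun n : ℕ =>
          ergmProb n (l / n) (β * Real.log n) {G | (vT G : ℝ) / n < 1 - ε})
        atTop (nhds 0)) :=
  ergm_phase_transition_general l β hl
end
end
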